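/- Let Y and N be independent real random variables where N ~ Normal(0, α²) with α > 0, E[Y] = 0, and E[Y²] = α² < ∞. Let X = Y + N with density p and score function ρ = p'/p. Then ρ(X) = E[−N/α² | X] almost surely, and J(X) = Var(X)·E[ρ(X)²] ≤ 2. -/

import Mathlib

open MeasureTheory ProbabilityTheory Real Filter
open scoped ENNReal NNReal Topology

/-!
Write `φ` for the density of `N` and `ν` for the law of `Y`. By independence `X = Y + N` has the
density `q x = ∫ φ (x - y) dν(y)`, which is positive and, since `φ` and `φ'` are bounded,
differentiable with `q' x = ∫ φ' (x - y) dν(y)` (`hasDerivAt_convolution`). The given density `p` is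
continuous and equals `q` a.e., hence everywhere, so `p' = q'` and `p ρ = q'`.

Since `φ' z = φ z * (-z / α²)`, Fubini and a translation (`setIntegral_comp_noise`) give
`E[-N/α² ; X ∈ B] = ∫_B q' = ∫_B ρ p = E[ρ(X) ; X ∈ B]` for every Borel set `B`, which characterises
`ρ(X)` as the conditional expectation. The law of total variance then yields
`E[ρ(X)²] ≤ E[N²]/α⁴ = 1/α²`, while `E[X²] = 2α²`.
-/

/-- For a probability measure `ν` and a Lebesgue integrable `g`, the function `(y, x) ↦ g (x - y)` is
integrable for `ν ⊗ volume`: each slice in `x` has the same `L¹` norm by translation invariance. -/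
lemma integrable_comp_sub_prod (ν : Measure ℝ) [IsProbabilityMeasure ν] {g : ℝ → ℝ}
    (hg : Integrable g) (hgm : Measurable g) :
    Integrable (fun z : ℝ × ℝ => g (z.2 - z.1)) (ν.prod volume) := by
  have hmeas : Measurable fun z : ℝ × ℝ => g (z.2 - z.1) :=
    hgm.comp (measurable_snd.sub measurable_fst)
  rw [integrable_prod_iff hmeas.aestronglyMeasurable]
  refine ⟨ae_of_all _ fun y => hg.comp_sub_right y, ?_⟩
  have h : ∀ y : ℝ, ∫ x, ‖g (x - y)‖ = ∫ x, ‖g x‖ :=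
    fun y => integral_sub_right_eq_self (fun x => ‖g x‖) y
  simp only [h]
  exact integrable_const _

/-- For `X = Y + N` with independent `Y ∼ ν` and `N` Gaussian with density `φ`, the restriction to
`{X ∈ B}` of the mean of `H (N)` is the integral over `B` of the convolution `(H φ) ∗ ν`.
With `H = 1` this identifies the density of `X`. -/
lemma setIntegral_comp_noise {Ω : Type*} [MeasureSpace Ω]
    [IsProbabilityMeasure (ℙ : Measure Ω)]
    {Y N : Ω → ℝ} (hY : Measurable Y) (hN : Measurable N) (hindep : IndepFun Y N ℙ)
    {v : ℝ≥0} (hv : v ≠ 0) (hlaw : Measure.map N ℙ = gaussianReal 0 v)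
    {H : ℝ → ℝ} (hH : Measurable H) (hHint : Integrable fun z => gaussianPDFReal 0 v z * H z)
    {B : Set ℝ} (hB : MeasurableSet B) :
    ∫ ω in (fun ω => Y ω + N ω) ⁻¹' B, H (N ω) =
      ∫ x in B, ∫ y, gaussianPDFReal 0 v (x - y) * H (x - y) ∂(Measure.map Y ℙ) := by
  have : IsProbabilityMeasure (Measure.map Y (ℙ : Measure Ω)) :=
    Measure.isProbabilityMeasure_map hY.aemeasurable
  set ν := Measure.map Y (ℙ : Measure Ω) with hν
  have hjoint : Measure.map (fun ω => (Y ω, N ω)) ℙ = ν.prod (gaussianReal 0 v) := by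
    rw [(indepFun_iff_map_prod_eq_prod_map_map hY.aemeasurable hN.aemeasurable).1 hindep, hlaw]
  have hHγ : Integrable H (gaussianReal 0 v) := by
    rw [gaussianReal_of_var_ne_zero _ hv,
      integrable_withDensity_iff_integrable_smul' (by fun_prop) (by simp [gaussianPDF])]
    simpa [gaussianPDF, gaussianPDFReal_nonneg] using hHint
  have hS : MeasurableSet {z : ℝ × ℝ | z.1 + z.2 ∈ B} :=
    (measurable_fst.add measurable_snd) hB
  have hFint : Integrable ({z : ℝ × ℝ | z.1 + z.2 ∈ B}.indicator fun z => H z.2)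
      (ν.prod (gaussianReal 0 v)) := (hHγ.comp_snd ν).indicator hS
  have hconv := integrable_comp_sub_prod ν hHint (by fun_prop)
  have hconvB : Integrable (fun z : ℝ × ℝ => B.indicator
      (fun _ => gaussianPDFReal 0 v (z.2 - z.1) * H (z.2 - z.1)) z.2) (ν.prod volume) := by
    refine (hconv.indicator (measurable_snd hB)).congr (ae_of_all _ fun z => ?_)
    by_cases hz : z.2 ∈ B <;> simp [Set.indicator, hz]
  calc ∫ ω in (fun ω => Y ω + N ω) ⁻¹' B, H (N ω)
      = ∫ ω, ({z : ℝ × ℝ | z.1 + z.2 ∈ B}.indicator fun z => H z.2) (Y ω, N ω) := by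
        have hXB : MeasurableSet ((fun ω => Y ω + N ω) ⁻¹' B) := (hY.add hN) hB
        rw [← integral_indicator hXB]
        rfl
    _ = ∫ z, ({z : ℝ × ℝ | z.1 + z.2 ∈ B}.indicator fun z => H z.2) z
          ∂(ν.prod (gaussianReal 0 v)) := by
        rw [← hjoint, integral_map (by fun_prop)]
        rw [hjoint]
        exact hFint.aestronglyMeasurable
    _ = ∫ y, ∫ n, ({z : ℝ × ℝ | z.1 + z.2 ∈ B}.indicator fun z => H z.2) (y, n)
          ∂(gaussianReal 0 v) ∂ν := integral_prod _ hFint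
    _ = ∫ y, (∫ x, B.indicator
          (fun _ => gaussianPDFReal 0 v (x - y) * H (x - y)) x) ∂ν := by
        refine integral_congr_ae (ae_of_all _ fun y => ?_)
        simp only
        rw [integral_gaussianReal_eq_integral_smul hv, ← integral_sub_right_eq_self _ y]
        refine integral_congr_ae (ae_of_all _ fun x => ?_)
        by_cases hx : x ∈ B <;> simp [Set.indicator, hx]
    _ = ∫ x, ∫ y, B.indicator
          (fun _ => gaussianPDFReal 0 v (x - y) * H (x - y)) x ∂ν :=
        integral_integral_swap hconvB
    _ = ∫ x in B, ∫ y, gaussianPDFReal 0 v (x - y) * H (x - y) ∂ν := by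
        rw [← integral_indicator hB]
        refine integral_congr_ae (ae_of_all _ fun x => ?_)
        by_cases hx : x ∈ B <;> simp [Set.indicator, hx]

/-- Differentiation under the integral sign for the convolution of a bounded function having a
bounded derivative with a probability measure. -/
lemma hasDerivAt_convolution (ν : Measure ℝ) [IsProbabilityMeasure ν] {f f' : ℝ → ℝ} {C C' : ℝ}
    (hf : ∀ z, HasDerivAt f (f' z) z) (hC : ∀ z, |f z| ≤ C) (hC' : ∀ z, |f' z| ≤ C')
    (x : ℝ) :
    HasDerivAt (fun x => ∫ y, f (x - y) ∂ν) (∫ y, f' (x - y) ∂ν) x := by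
  have hfm : Measurable f :=
    (continuous_iff_continuousAt.2 fun z => (hf z).continuousAt).measurable
  have hfm' : Measurable f' := by
    rw [← show deriv f = f' from funext fun z => (hf z).deriv]
    exact measurable_deriv f
  refine (hasDerivAt_integral_of_dominated_loc_of_deriv_le (μ := ν) (s := Set.univ)
    (F := fun x y => f (x - y)) (F' := fun x y => f' (x - y)) (bound := fun _ => C')
    univ_mem ?_ ?_ ?_ ?_ ?_ ?_).2
  · exact Eventually.of_forall fun x =>
      (hfm.comp (measurable_const.sub measurable_id)).aestronglyMeasurable
  · exact .of_bound (hfm.comp (measurable_const.sub measurable_id)).aestronglyMeasurable C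
      (ae_of_all _ fun y => hC _)
  · exact (hfm'.comp (measurable_const.sub measurable_id)).aestronglyMeasurable
  · exact ae_of_all _ fun y x _ => hC' _
  · exact integrable_const _
  · exact ae_of_all _ fun y x _ => by simpa using (hf (x - y)).comp_sub_const x y

lemma hasDerivAt_gaussianPDFReal {v : ℝ≥0} (hv : v ≠ 0) (z : ℝ) :
    HasDerivAt (gaussianPDFReal 0 v) (gaussianPDFReal 0 v z * (-z / v)) z := by
  have hv_ne : (v : ℝ) ≠ 0 := by exact_mod_cast hv
  have h := ((((hasDerivAt_id z).pow 2).neg.div_const (2 * (v : ℝ))).exp).const_mul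
    (√(2 * π * v))⁻¹
  rw [gaussianPDFReal_def]
  convert! h using 1
  · ext x; simp
  · simp; field_simp

/-- The centred Gaussian density and its derivative are bounded; this is the domination that allows
differentiating the density of `Y + N` under the integral sign. -/
lemma gaussianPDFReal_zero_bounds {v : ℝ≥0} (hv : v ≠ 0) (z : ℝ) :
    |gaussianPDFReal 0 v z| ≤ (√(2 * π * v))⁻¹ ∧
    |gaussianPDFReal 0 v z * (-z / v)| ≤ (√(2 * π * v))⁻¹ * ((1 + 2 * v) / v) := by
  have hv_pos : (0 : ℝ) < v := by exact_mod_cast pos_iff_ne_zero.2 hv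
  have hφ := gaussianPDFReal_nonneg 0 v z
  have hs : 0 ≤ (√(2 * π * v))⁻¹ := by positivity
  constructor
  · rw [abs_of_nonneg hφ, gaussianPDFReal_def]
    refine mul_le_of_le_one_right hs (Real.exp_le_one_iff.2 ?_)
    exact div_nonpos_of_nonpos_of_nonneg (neg_nonpos.2 (sq_nonneg _)) (by positivity)
  · rw [abs_mul, abs_of_nonneg hφ, gaussianPDFReal_def, abs_div, abs_neg, abs_of_pos hv_pos]
    simp only [sub_zero]
    rw [mul_assoc, ← mul_div_assoc]
    refine mul_le_mul_of_nonneg_left ?_ hs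
    refine div_le_div_of_nonneg_right ?_ hv_pos.le
    -- `|z| ≤ (1 + 2 * v) * (1 + z² / (2 * v)) ≤ (1 + 2 * v) * exp (z² / (2 * v))`
    rw [neg_div, Real.exp_neg, inv_mul_le_iff₀ (Real.exp_pos _)]
    have h1 := Real.add_one_le_exp (z ^ 2 / (2 * v))
    have h2 : |z| ≤ 1 + z ^ 2 := by
      rw [← sq_abs]; nlinarith [sq_nonneg (|z| - 1), abs_nonneg z]
    have h3 : z ^ 2 = 2 * v * (z ^ 2 / (2 * v)) := by field_simp
    have h4 : 0 ≤ z ^ 2 / (2 * v) := by positivity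
    nlinarith [mul_le_mul_of_nonneg_right h1 (by positivity : (0 : ℝ) ≤ 1 + 2 * v)]

/-- For `X = Y + N` with `N` Gaussian of the same variance as `Y`, the score of
`X` is `E[−N/α² | X]` a.s. and `J(X) = Var(X)·E[ρ(X)²] ≤ 2`. -/
theorem score_of_gaussian_perturbation
    {Ω : Type*} [MeasureSpace Ω] [IsProbabilityMeasure (ℙ : Measure Ω)]
    (Y N : Ω → ℝ) (hYmeas : Measurable Y) (hNmeas : Measurable N)
    (hindep : IndepFun Y N ℙ)
    (α : ℝ) (hα : 0 < α)
    (hN : Measure.map N ℙ = gaussianReal 0 ((α ^ 2).toNNReal))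
    (hYmean : ∫ ω, Y ω = 0)
    (hYvar : ∫ ω, Y ω ^ 2 = α ^ 2)
    (hYsq : Integrable (fun ω => Y ω ^ 2) ℙ)
    (X : Ω → ℝ) (hX : X = fun ω => Y ω + N ω)
    (p p' : ℝ → ℝ) (hp : ∀ x, 0 ≤ p x)
    (hdens : Measure.map X ℙ = volume.withDensity (fun x => ENNReal.ofReal (p x)))
    (hderiv : ∀ x, HasDerivAt p (p' x) x)
    (ρ : ℝ → ℝ) (hρ : ∀ x, 0 < p x → ρ x = p' x / p x) :
    (fun ω => ρ (X ω)) =ᵐ[ℙ]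
      ℙ[fun ω => -N ω / α ^ 2 | MeasurableSpace.comap X Real.measurableSpace] ∧
    (∫ ω, X ω ^ 2) * ∫ ω, (ρ (X ω)) ^ 2 ≤ 2 := by
  have hα2 : (0 : ℝ) < α ^ 2 := by positivity
  set v : ℝ≥0 := (α ^ 2).toNNReal with hvdef
  have hvR : (v : ℝ) = α ^ 2 := Real.coe_toNNReal _ hα2.le
  have hv : v ≠ 0 := by
    intro h
    rw [h, NNReal.coe_zero] at hvR
    exact hα2.ne hvR
  have hXmeas : Measurable X := hX ▸ hYmeas.add hNmeas
  have : IsProbabilityMeasure (Measure.map Y (ℙ : Measure Ω)) :=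
    Measure.isProbabilityMeasure_map hYmeas.aemeasurable
  have : IsProbabilityMeasure (Measure.map X (ℙ : Measure Ω)) :=
    Measure.isProbabilityMeasure_map hXmeas.aemeasurable
  set ν := Measure.map Y (ℙ : Measure Ω) with hν
  set q : ℝ → ℝ := fun x => ∫ y, gaussianPDFReal 0 v (x - y) ∂ν with hq
  set q' : ℝ → ℝ := fun x => ∫ y, gaussianPDFReal 0 v (x - y) * (-(x - y) / v) ∂ν with hq'
  have hN2 : MemLp N 2 ℙ := by
    have h := memLp_id_gaussianReal (μ := 0) (v := v) 2
    rw [← hN] at h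
    exact (memLp_map_measure_iff aestronglyMeasurable_id hNmeas.aemeasurable).1 h
  have hNmean : ∫ ω, N ω = 0 := by
    have h := integral_id_gaussianReal (μ := 0) (v := v)
    rwa [← hN, integral_map hNmeas.aemeasurable (by fun_prop)] at h
  have hNvar : ∫ ω, N ω ^ 2 = α ^ 2 := by
    have h := variance_fun_id_gaussianReal (μ := 0) (v := v)
    rw [variance_eq_integral (by fun_prop), integral_id_gaussianReal, ← hN,
      integral_map hNmeas.aemeasurable (by fun_prop), hvR] at h
    simpa using h
  -- The Gaussian density times `-z / v` is integrable, since the Gaussian has a first moment.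
  have hφ' : Integrable fun z : ℝ => gaussianPDFReal 0 v z * (-z / v) := by
    have h : Integrable (fun z : ℝ => -z / v) (gaussianReal 0 v) :=
      ((memLp_id_gaussianReal (μ := 0) (v := v) 1).integrable (by simp)).neg.div_const _
    rw [gaussianReal_of_var_ne_zero _ hv,
      integrable_withDensity_iff_integrable_smul' (by fun_prop) (by simp [gaussianPDF])] at h
    simpa [gaussianPDF, gaussianPDFReal_nonneg] using h
  have hderivq : ∀ x, HasDerivAt q (q' x) x := fun x =>
    hasDerivAt_convolution ν (hasDerivAt_gaussianPDFReal hv)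
      (fun z => (gaussianPDFReal_zero_bounds hv z).1)
      (fun z => (gaussianPDFReal_zero_bounds hv z).2) x
  have hqint : Integrable q :=
    (integrable_comp_sub_prod ν (integrable_gaussianPDFReal 0 v) (by fun_prop)).integral_prod_right
  have hq'int : Integrable q' :=
    (integrable_comp_sub_prod ν hφ' (by fun_prop)).integral_prod_right
  have hqpos : ∀ x, 0 < q x := by
    intro x
    refine (integral_pos_iff_support_of_nonneg (fun y => gaussianPDFReal_nonneg _ _ _) ?_).2 ?_
    · have hmeas : Measurable fun y => gaussianPDFReal 0 v (x - y) :=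
        (measurable_gaussianPDFReal 0 v).comp (measurable_const.sub measurable_id)
      exact .of_bound hmeas.aestronglyMeasurable _
        (ae_of_all _ fun y => (gaussianPDFReal_zero_bounds hv (x - y)).1)
    · have : Function.support (fun y => gaussianPDFReal 0 v (x - y)) = Set.univ :=
        Set.eq_univ_of_forall fun y => (gaussianPDFReal_pos _ _ _ hv).ne'
      rw [this]
      simp
  have hpcont : Continuous p := continuous_iff_continuousAt.2 fun x => (hderiv x).continuousAt
  have hqcont : Continuous q := continuous_iff_continuousAt.2 fun x => (hderivq x).continuousAt
  have hpint : Integrable p := by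
    refine ⟨hpcont.aestronglyMeasurable, ?_⟩
    rw [hasFiniteIntegral_iff_ofReal (ae_of_all _ hp), ← setLIntegral_univ,
      ← withDensity_apply _ MeasurableSet.univ, ← hdens]
    exact measure_lt_top _ _
  -- `p` and `q` are densities of the same law, so they agree a.e., hence everywhere by continuity.
  have hpq : p = q := by
    refine (Continuous.ae_eq_iff_eq volume hpcont hqcont).1 ?_
    refine hpint.ae_eq_of_forall_setIntegral_eq _ _ hqint fun B hB _ => ?_
    have h1 : ∫ x in B, p x = (Measure.map X ℙ).real B := by
      rw [hdens, Measure.real, withDensity_apply _ hB,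
        ← ofReal_integral_eq_lintegral_ofReal hpint.integrableOn (ae_of_all _ hp),
        ENNReal.toReal_ofReal (integral_nonneg hp)]
    have h2 := setIntegral_comp_noise hYmeas hNmeas hindep hv hN (H := fun _ => 1)
      measurable_const (by simpa using integrable_gaussianPDFReal 0 v) hB
    simp only [mul_one] at h2
    rw [h1, ← h2, map_measureReal_apply hXmeas hB, hX]
    simp
  have hp'q' : p' = q' := by
    ext x
    have h := hderiv x
    rw [hpq] at h
    exact h.unique (hderivq x)
  have hpρ : ∀ x, p x * ρ x = q' x := by
    intro x
    have hpx : 0 < p x := hpq ▸ hqpos x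
    rw [hρ x hpx, hp'q', mul_div_cancel₀ _ hpx.ne']
  have hq'meas : Measurable q' := by
    rw [← show deriv q = q' from funext fun x => (hderivq x).deriv]
    exact measurable_deriv q
  have hρmeas : Measurable ρ := by
    have : ρ = fun x => q' x / p x := by
      ext x
      rw [hρ x (hpq ▸ hqpos x), hp'q']
    rw [this]
    exact hq'meas.div hpcont.measurable
  have hρint : Integrable ρ (Measure.map X ℙ) := by
    rw [hdens, integrable_withDensity_iff_integrable_smul' (by fun_prop) (by simp)]
    simpa [hp, hpρ] using hq'int
  have hρXint : Integrable (fun ω => ρ (X ω)) ℙ := hρint.comp_measurable hXmeas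
  set Z : Ω → ℝ := fun ω => -N ω / α ^ 2 with hZ
  have hZ2 : MemLp Z 2 ℙ := by
    have : Z = fun ω => (-(α ^ 2)⁻¹) * N ω := by ext ω; simp only [hZ]; ring
    rw [this]
    exact hN2.const_mul _
  have hm : MeasurableSpace.comap X Real.measurableSpace ≤ MeasureSpace.toMeasurableSpace :=
    hXmeas.comap_le
  have hcond : (fun ω => ρ (X ω)) =ᵐ[ℙ] ℙ[Z | MeasurableSpace.comap X Real.measurableSpace] := by
    refine ae_eq_condExp_of_forall_setIntegral_eq hm (hZ2.integrable (by norm_num))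
      (fun _ _ _ => hρXint.integrableOn) ?_ ?_
    · rintro _ ⟨B, hB, rfl⟩ -
      have h := setIntegral_comp_noise hYmeas hNmeas hindep hv hN (H := fun z => -z / v)
        (by fun_prop) hφ' hB
      rw [← hX] at h
      simp only [hvR] at h
      simp only [hZ]
      rw [h, ← setIntegral_map hB hρmeas.aestronglyMeasurable hXmeas.aemeasurable, hdens,
        setIntegral_withDensity_eq_setIntegral_toReal_smul₀ (by fun_prop) (by simp) _ hB]
      refine integral_congr_ae (ae_of_all _ fun x => ?_)
      simp only [ENNReal.toReal_ofReal (hp x), smul_eq_mul, hpρ, hq', hvR, hν]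
    · exact (hρmeas.comp (comap_measurable X)).aestronglyMeasurable
  refine ⟨hcond, ?_⟩
  have hY2 : MemLp Y 2 ℙ := (memLp_two_iff_integrable_sq hYmeas.aestronglyMeasurable).2 hYsq
  have hXvar : ∫ ω, X ω ^ 2 = 2 * α ^ 2 := by
    have h1 : ∫ ω, Y ω * N ω = 0 := by
      rw [hindep.integral_fun_mul_eq_mul_integral hYmeas.aestronglyMeasurable
        hNmeas.aestronglyMeasurable, hYmean, zero_mul]
    have h2 : Integrable (fun ω => Y ω * N ω) ℙ := hY2.integrable_mul hN2
    have h3 : ∀ ω, X ω ^ 2 = Y ω ^ 2 + N ω ^ 2 + 2 * (Y ω * N ω) := by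
      intro ω; rw [hX]; ring
    simp only [h3]
    have h4 : Integrable (fun ω => Y ω ^ 2 + N ω ^ 2) ℙ := hYsq.add hN2.integrable_sq
    rw [integral_add h4 (h2.const_mul 2),
      integral_add hYsq hN2.integrable_sq, integral_const_mul, h1, hYvar, hNvar]
    ring
  have hZvar : ∫ ω, Z ω ^ 2 = 1 / α ^ 2 := by
    have : ∀ ω, Z ω ^ 2 = (1 / (α ^ 2) ^ 2) * N ω ^ 2 := by intro ω; simp only [hZ]; ring
    simp only [this]
    rw [integral_const_mul, hNvar]
    field_simp
  have hZmean : ∫ ω, Z ω = 0 := by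
    simp only [hZ]
    rw [integral_div, integral_neg, hNmean]
    simp
  -- Conditional Jensen, through the law of total variance `E[Var(Z|X)] + Var(E[Z|X]) = Var(Z)`.
  have hJ : ∫ ω, ρ (X ω) ^ 2 ≤ 1 / α ^ 2 := by
    have h := integral_condVar_add_variance_condExp hm hZ2
    have h0 : 0 ≤ ∫ ω, (Var[Z; ℙ | MeasurableSpace.comap X Real.measurableSpace]) ω :=
      integral_nonneg_of_ae (condExp_nonneg (ae_of_all _ fun ω => sq_nonneg _))
    rw [variance_of_integral_eq_zero hZ2.aestronglyMeasurable.aemeasurable hZmean, hZvar,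
      variance_of_integral_eq_zero integrable_condExp.aestronglyMeasurable.aemeasurable
        ((integral_condExp hm).trans hZmean)] at h
    have h1 : ∫ ω, ρ (X ω) ^ 2 =
        ∫ ω, (ℙ[Z | MeasurableSpace.comap X Real.measurableSpace]) ω ^ 2 :=
      integral_congr_ae (hcond.mono fun ω hω => by simp only [← hω])
    linarith
  rw [hXvar]
  calc 2 * α ^ 2 * ∫ ω, ρ (X ω) ^ 2 ≤ 2 * α ^ 2 * (1 / α ^ 2) := by gcongr
    _ = 2 := by field_simp
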